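/- Let X, Y be Banach spaces, N : X → Y with N(u) = S(u) + B(u,u), S a bounded linear bijection, B a bounded bilinear map such that for each u ∈ X the linear map w ↦ B(u,w) + B(w,u) is compact from X to Y. Suppose also that for each u ∈ X the operator G_u = S + B(u,·) + B(·,u) is injective. Then for every u ∈ X there exist open neighborhoods U ∋ u in X and V ∋ N(u) in Y such that N restricted to U is a bijection onto V. -/

import Mathlib

/-- Main abstract result: if N(u) = S(u) + B(u,u) with S a bounded linear bijection of
    Banach spaces, B bounded bilinear such that w ↦ B(u,w) + B(w,u) is compact and
    S + B(u,·) + B(·,u) is injective for each u, then N is a local bijection around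
    every point u. -/
theorem navier_stokes_local_bijection
    {X Y : Type*} [NormedAddCommGroup X] [NormedSpace ℝ X] [CompleteSpace X]
    [NormedAddCommGroup Y] [NormedSpace ℝ Y] [CompleteSpace Y]
    (S : X →L[ℝ] Y) (hS : Function.Bijective S)
    (B : X →L[ℝ] X →L[ℝ] Y)
    (hcpt : ∀ u : X, IsCompactOperator (fun w => B u w + B w u))
    (hinj : ∀ u : X, Function.Injective (fun w => S w + B u w + B w u)) :
    ∀ u : X, ∃ (U : Set X) (V : Set Y), IsOpen U ∧ IsOpen V ∧ u ∈ U ∧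
      (S u + B u u) ∈ V ∧ Set.BijOn (fun x => S x + B x x) U V := by
  intro u
  let e : X ≃L[ℝ] Y := ContinuousLinearEquiv.ofBijective S
    (LinearMap.ker_eq_bot.mpr hS.1) (LinearMap.range_eq_top.mpr hS.2)
  have he : ∀ x, e x = S x := fun x => rfl
  let K : X →L[ℝ] Y := B u + B.flip u
  have hK : ∀ w, K w = B u w + B w u := fun w => rfl
  let T : X →L[ℝ] X := (e.symm : Y →L[ℝ] X).comp K
  have hT : IsCompactOperator T := (hcpt u).clm_comp (e.symm : Y →L[ℝ] X)
  let G : X →L[ℝ] Y := S + K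
  have hG : ∀ w, G w = S w + B u w + B w u := fun w => by
    rw [add_assoc]; rfl
  have hGinj : Function.Injective G := by
    intro a b hab
    apply hinj u
    simpa only [hG] using hab
  have heT : ∀ w, e (T w) = K w := fun w => e.apply_symm_apply _
  have hGsurj : Function.Surjective G := by
    rcases hT.hasEigenvalue_or_mem_resolventSet (μ := (-1 : ℝ)) (by norm_num) with h | h
    · exfalso
      obtain ⟨v, hv⟩ := h.exists_hasEigenvector
      apply hv.2
      have h1 : T v = (-1 : ℝ) • v := hv.apply_eq_smul
      apply hGinj
      have h2 := heT v
      rw [h1, map_smul, he] at h2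
      change S v + K v = G 0
      rw [← h2, map_zero]
      simp
    · rw [spectrum.mem_resolventSet_iff, ContinuousLinearMap.isUnit_iff_bijective] at h
      intro y
      obtain ⟨x, hx⟩ := h.2 (e.symm y)
      refine ⟨-x, ?_⟩
      have h3 : (-1 : ℝ) • x - T x = e.symm y := by
        rw [← hx]
        simp [Algebra.algebraMap_eq_smul_one]
      have h4 := congrArg e h3
      rw [map_sub, heT, map_smul, he, e.apply_symm_apply] at h4
      change S (-x) + K (-x) = y
      rw [← h4, map_neg, map_neg]
      simp [sub_eq_add_neg]
  let g : X ≃L[ℝ] Y := ContinuousLinearEquiv.ofBijective G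
    (LinearMap.ker_eq_bot.mpr hGinj) (LinearMap.range_eq_top.mpr hGsurj)
  have hd : HasStrictFDerivAt (fun x => S x + B x x) (g : X →L[ℝ] Y) u := by
    have h := (S.hasStrictFDerivAt (x := u)).add
      ((B.hasStrictFDerivAt (x := u)).clm_apply (hasStrictFDerivAt_id u))
    exact h
  let P := hd.toOpenPartialHomeomorph (fun x => S x + B x x)
  exact ⟨P.source, P.target, P.open_source, P.open_target,
    hd.mem_toOpenPartialHomeomorph_source, hd.image_mem_toOpenPartialHomeomorph_target,
    P.bijOn⟩
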